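/- Suppose X, U, W are subspaces of X_p with X = U ⊕ W, U isomorphic to ℓ_2, W isomorphic to ℓ_p, and X complemented in X_p with projection P. Let β' = lim_{n→∞} inf{ b : for every ε > 0 there exists u ∈ U with ‖P_n u‖ < ε and r(u) ≤ b } (assumed to exist, with β' ≤ 1), where P_n is the basis projection of X_p onto the span of the first n natural basis vectors. Then for any c > 0, δ > 0, and ε with 0 < ε < β'·c·δ/max{c, δ^{-1}}, there is no ε' with 0 < ε' < ε such that for every N ∈ ℕ there exist x ∈ X with ‖x‖ = 1 and a finite set E ⊆ {N, N+1, …} satisfying (a) ‖x_{|[1,N]}‖ < N^{-1}, (b) |x_{|E}|_2 ≥ δ·|x|_2, and (c) ε ≥ c·|x_{|E}|_2 ≥ ω(E)^{(p-2)/(2p)} ≥ ε'. -/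

import Mathlib

open scoped ENNReal

noncomputable section

/-- The sequence space `ℓ_p` (of real sequences), for a real exponent `p`. -/
abbrev SeqP (p : ℝ) := lp (fun _ : ℕ => ℝ) (ENNReal.ofReal p)

/-- The sequence space `ℓ_2` (of real sequences). -/
abbrev Seq2 := lp (fun _ : ℕ => ℝ) 2

/-- The space `X_{p,w}`, realized as the submodule of `ℓ_p ⊕_∞ ℓ_2` consisting of the
pairs `(x, y)` with `y n = w n * x n`.  Since the norm on the product is the maximum of
the two norms, this is exactly the completion of the finitely supported sequences under
`‖a‖ = max {|a|_p, |a|_{2,w}}`, the element with coordinates `a` being identified with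
the pair `(a, w·a)`. -/
def XpwMod (p : ℝ) (w : ℕ → ℝ) : Submodule ℝ (SeqP p × Seq2) where
  carrier := {z | ∀ n, (z.2 : ℕ → ℝ) n = w n * (z.1 : ℕ → ℝ) n}
  add_mem' := by
    intro a b ha hb n
    simp only [Prod.fst_add, Prod.snd_add, lp.coeFn_add, Pi.add_apply, ha n, hb n]
    ring
  zero_mem' := by
    intro n
    simp
  smul_mem' := by
    intro c a ha n
    simp only [Prod.smul_fst, Prod.smul_snd, lp.coeFn_smul, Pi.smul_apply, ha n,
      smul_eq_mul]
    ring

/-- The space `X_{p,w}` with its natural norm `‖a‖ = max {|a|_p, |a|_{2,w}}`. -/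
def Xpw (p : ℝ) (w : ℕ → ℝ) : Type := ↥(XpwMod p w)

variable {p : ℝ} {w : ℕ → ℝ}

instance [Fact (1 ≤ ENNReal.ofReal p)] : NormedAddCommGroup (Xpw p w) :=
  inferInstanceAs (NormedAddCommGroup ↥(XpwMod p w))

instance [Fact (1 ≤ ENNReal.ofReal p)] : NormedSpace ℝ (Xpw p w) :=
  inferInstanceAs (NormedSpace ℝ ↥(XpwMod p w))

/-- The pair of coordinates (in `ℓ_p` and in weighted `ℓ_2`) of an element of `X_{p,w}`. -/
def Xpw.pair (x : Xpw p w) : SeqP p × Seq2 := (show ↥(XpwMod p w) from x).val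

/-- The underlying sequence of coordinates of an element of `X_{p,w}`. -/
def seq (x : Xpw p w) : ℕ → ℝ := (Xpw.pair x).1

/-- `|x|_p` for `x ∈ X_{p,w}`. -/
def nrmP (x : Xpw p w) : ℝ := ‖(Xpw.pair x).1‖

/-- `|x|_2 = |x|_{2,w}` for `x ∈ X_{p,w}`. -/
def nrm2 (x : Xpw p w) : ℝ := ‖(Xpw.pair x).2‖

/-- The ratio `r(x) = |x|_2 / |x|_p`. -/
def ratio (x : Xpw p w) : ℝ := nrm2 x / nrmP x

/-- `ω(E) = ∑_{n ∈ E} w_n^{2p/(p-2)}`. -/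
def omegaE (p : ℝ) (w : ℕ → ℝ) (E : Set ℕ) : ℝ :=
  ∑' n : E, w (n : ℕ) ^ (2 * p / (p - 2))

/-- The pairing `⟨x, y⟩ = ∑_n x_n y_n w_n²`. -/
def pairW (w : ℕ → ℝ) (x y : Xpw p w) : ℝ :=
  ∑' n, seq x n * seq y n * w n ^ 2

/-- `w` is a weight sequence suitable for Rosenthal's space `X_p`: it is positive and for
every `ε > 0`, `∑_{w_n < ε} w_n^{2p/(p-2)} = ∞`. -/
def IsXpWeight (p : ℝ) (w : ℕ → ℝ) : Prop :=
  (∀ n, 0 < w n) ∧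
    ∀ ε : ℝ, 0 < ε →
      (∑' n : {n : ℕ | w n < ε}, ENNReal.ofReal (w (n : ℕ) ^ (2 * p / (p - 2)))) = ⊤

theorem memℓp_indicator {q : ℝ≥0∞} (E : Set ℕ) {f : ℕ → ℝ} (hf : Memℓp f q) :
    Memℓp (E.indicator f) q := by
  rcases ENNReal.trichotomy q with hq | hq | hq
  · subst hq
    refine memℓp_zero ((memℓp_zero_iff.mp hf).subset ?_)
    intro i hi
    simp only [Set.mem_setOf_eq] at hi ⊢
    intro h
    exact hi (by simp [Set.indicator_apply, h])
  · subst hq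
    obtain ⟨C, hC⟩ := (memℓp_infty_iff.mp hf)
    refine memℓp_infty ⟨C, ?_⟩
    rintro x ⟨i, rfl⟩
    exact le_trans (norm_indicator_le_norm_self f i) (hC ⟨i, rfl⟩)
  · refine memℓp_gen (Summable.of_nonneg_of_le (fun i => ?_) (fun i => ?_)
      (hf.summable hq))
    · positivity
    · exact Real.rpow_le_rpow (norm_nonneg _) (norm_indicator_le_norm_self f i) hq.le

/-- The restriction `x ↦ x_{|E}` of elements of `X_{p,w}` to a set `E` of coordinates. -/
def restrict (E : Set ℕ) (x : Xpw p w) : Xpw p w :=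
  show ↥(XpwMod p w) from
  ⟨(⟨E.indicator ((Xpw.pair x).1 : ℕ → ℝ), memℓp_indicator E (lp.memℓp (Xpw.pair x).1)⟩,
    ⟨E.indicator ((Xpw.pair x).2 : ℕ → ℝ), memℓp_indicator E (lp.memℓp (Xpw.pair x).2)⟩), by
    intro n
    by_cases hn : n ∈ E
    · change E.indicator ((Xpw.pair x).2 : ℕ → ℝ) n = w n * E.indicator ((Xpw.pair x).1 : ℕ → ℝ) n
      rw [Set.indicator_of_mem hn, Set.indicator_of_mem hn]
      exact (show ↥(XpwMod p w) from x).2 n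
    · change E.indicator ((Xpw.pair x).2 : ℕ → ℝ) n = w n * E.indicator ((Xpw.pair x).1 : ℕ → ℝ) n
      simp [Set.indicator_of_notMem hn]⟩

/-!
Suppose that `x_N = u_N + v_N`, with `u_N ∈ U` and `v_N ∈ W`, and `E_N` are as in (a)–(c) for
every `N`. Since `p > 2`, bounded coordinatewise null sequences in `X_{p,w}` are weakly null, so
by (a) the `x_N`, and with them the `u_N` and the `v_N`, tend weakly to `0`. Pitt's theorem
(operators from `ℓ_p` to `ℓ_2` turn weak into norm convergence, by a gliding hump and the
parallelogram law) applies to `x ↦ (w_n x_n)` on `W ≅ ℓ_p` and shows `|v_N|_2 → 0`. On the other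
hand, if `β < β'` then `β |u_N|_p ≤ |u_N|_2` for large `N`, because `P_n u_N → 0`. Together with
Hölder's inequality `|u_{|E}|_2 ≤ ω(E)^{(p-2)/(2p)} |u|_p`, (b) and (c) this gives
`(β - ε/δ) |x_{N|E_N}|_2 ≤ (β + ε) |v_N|_2 → 0`. As `β` may be chosen with `ε < β δ`, this
contradicts `c |x_{N|E_N}|_2 ≥ ε'`.
-/

open Filter (Tendsto atTop)
open scoped Topology

/-- A family in a real normed space is weakly null along a filter if every continuous linear
functional tends to `0` along it; this is convergence to `0` in `WeakSpace ℝ E`, spelled out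
so that no transfer between the two type synonyms is needed. -/
def WeaklyNull {α E : Type*} [NormedAddCommGroup E] [NormedSpace ℝ E] (l : Filter α)
    (x : α → E) : Prop :=
  ∀ f : StrongDual ℝ E, Tendsto (fun a => f (x a)) l (𝓝 0)

namespace WeaklyNull

variable {α E F : Type*} [NormedAddCommGroup E] [NormedSpace ℝ E] [NormedAddCommGroup F]
  [NormedSpace ℝ F] {l : Filter α} {x : α → E} {y : α → F}

theorem map (hx : WeaklyNull l x) (T : E →L[ℝ] F) : WeaklyNull l (fun a => T (x a)) :=
  fun f => hx (f.comp T)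

theorem prodMk (hx : WeaklyNull l x) (hy : WeaklyNull l y) :
    WeaklyNull l (fun a => (x a, y a)) := by
  intro f
  have hsum := (hx (f.comp (.inl ℝ E F))).add (hy (f.comp (.inr ℝ E F)))
  rw [add_zero] at hsum
  refine hsum.congr fun a => ?_
  simp only [ContinuousLinearMap.comp_apply, ← map_add]
  simp

theorem of_linearIsometry (T : E →ₗᵢ[ℝ] F) (hTx : WeaklyNull l (fun a => T (x a))) :
    WeaklyNull l x := by
  intro f
  obtain ⟨g, hg, -⟩ := exists_extension_norm_eq T.toLinearMap.range
    (f.comp (T.equivRange.symm : T.toLinearMap.range →L[ℝ] E))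
  refine (hTx g).congr fun a => ?_
  simpa using hg (T.equivRange (x a))

end WeaklyNull

section BoundedCoordinatewiseNull

variable {α ι : Type*} {E : ι → Type*} [∀ i, NormedAddCommGroup (E i)] {q : ℝ≥0∞}
  {l : Filter α} {y : α → lp E q} {C : ℝ}

theorem norm_sum_single_add_rpow_le [DecidableEq ι] (hq : 0 < q.toReal) (s : Finset ι)
    (f : ∀ i, E i) (g : lp E q) :
    ‖∑ i ∈ s, lp.single q i (f i) + g‖ ^ q.toReal ≤
      ∑ i ∈ s, ‖f i + g i‖ ^ q.toReal + ‖g‖ ^ q.toReal := by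
  set h := ∑ i ∈ s, lp.single q i (f i) + g with h_def
  have h_apply : ∀ i ∈ s, h i = f i + g i := fun i hi => by
    rw [h_def, lp.coeFn_add, Pi.add_apply, lp.coeFn_sum, Finset.sum_apply]
    simp [Finset.sum_pi_single, hi]
  have h_compl : h - ∑ i ∈ s, lp.single q i (h i) = g - ∑ i ∈ s, lp.single q i (g i) := by
    rw [Finset.sum_congr rfl fun i hi => by rw [h_apply i hi, lp.single_add],
      Finset.sum_add_distrib, h_def]
    abel
  have h_sum : ∑ i ∈ s, ‖h i‖ ^ q.toReal = ∑ i ∈ s, ‖f i + g i‖ ^ q.toReal :=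
    Finset.sum_congr rfl fun i hi => by rw [h_apply i hi]
  have h_norm := lp.norm_compl_sum_single hq h s
  rw [h_compl, lp.norm_compl_sum_single hq, h_sum] at h_norm
  have : 0 ≤ ∑ i ∈ s, ‖g i‖ ^ q.toReal := by positivity
  linarith

theorem eventually_norm_sum_single_add_rpow_lt [DecidableEq ι] (hq : 0 < q.toReal)
    (hC : ∀ a, ‖y a‖ ≤ C) (hy : ∀ i, Tendsto (fun a => y a i) l (𝓝 0)) (s : Finset ι)
    (f : ∀ i, E i) {γ : ℝ} (hγ : 0 < γ) :
    ∀ᶠ a in l, ‖∑ i ∈ s, lp.single q i (f i) + y a‖ ^ q.toReal <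
      ‖∑ i ∈ s, lp.single q i (f i)‖ ^ q.toReal + (C ^ q.toReal + γ) := by
  have h_lim : Tendsto (fun a => ∑ i ∈ s, ‖f i + y a i‖ ^ q.toReal) l
      (𝓝 (‖∑ i ∈ s, lp.single q i (f i)‖ ^ q.toReal)) := by
    rw [lp.norm_sum_single hq]
    refine tendsto_finsetSum _ fun i _ => ?_
    simpa using (((hy i).const_add (f i)).norm).rpow_const (Or.inr hq.le)
  filter_upwards [h_lim.eventually_lt_const (lt_add_of_pos_right _ hγ)] with a ha
  have h_le := norm_sum_single_add_rpow_le hq s f (y a)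
  have h_bound : ‖y a‖ ^ q.toReal ≤ C ^ q.toReal :=
    Real.rpow_le_rpow (lp.norm_nonneg' _) (hC a) hq.le
  linarith

variable [∀ i, NormedSpace ℝ (E i)] [Fact (1 ≤ q)]

theorem tendsto_sum_single_zero [DecidableEq ι] {f : α → ∀ i, E i}
    (hf : ∀ i, Tendsto (fun a => f a i) l (𝓝 0)) (s : Finset ι) :
    Tendsto (fun a => ∑ i ∈ s, lp.single q i (f a i)) l (𝓝 0) := by
  simpa using tendsto_finsetSum s fun i _ =>
    ((lp.singleContinuousLinearMap ℝ E q i).continuous.tendsto 0).comp (hf i)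

variable {F : Type*} [NormedAddCommGroup F]
  [NormedSpace ℝ F] {r η : ℝ}

/-- The gliding hump: since the sign can be chosen in the lower estimate `hF`, adding one more
hump `± y a` to a finitely supported vector increases `‖S z‖ ^ r` by `η ^ r`, while
`‖z‖ ^ q` grows by a bounded amount only. -/
theorem exists_norm_rpow_lt_and_lt_norm_map_rpow (hq : q ≠ ⊤) (hr : 0 < r)
    (hC : ∀ a, ‖y a‖ ≤ C) (hy : ∀ i, Tendsto (fun a => y a i) l (𝓝 0))
    (hF : ∀ a b : F, ‖a‖ ^ r + ‖b‖ ^ r ≤ max (‖a + b‖ ^ r) (‖a - b‖ ^ r))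
    (S : lp E q →L[ℝ] F) (hη : 0 ≤ η) (hS : ∃ᶠ a in l, η ≤ ‖S (y a)‖) (N : ℕ) :
    ∃ z : lp E q, ‖z‖ ^ q.toReal < N * (C ^ q.toReal + 1) + 1 ∧ N * η ^ r - 1 < ‖S z‖ ^ r := by
  classical
  have hq0 : 0 < q.toReal := ENNReal.toReal_pos (zero_lt_one.trans_le Fact.out).ne' hq
  induction N with
  | zero => exact ⟨0, by simp [Real.zero_rpow hq0.ne', Real.zero_rpow hr.ne']⟩
  | succ N ih =>
    obtain ⟨z, hz_norm, hSz⟩ := ih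
    obtain ⟨s, hs_norm, hSs⟩ : ∃ s : Finset ι,
        ‖∑ i ∈ s, lp.single q i (z i)‖ ^ q.toReal < N * (C ^ q.toReal + 1) + 1 ∧
          N * η ^ r - 1 < ‖S (∑ i ∈ s, lp.single q i (z i))‖ ^ r := by
      have h_trunc : Tendsto (fun s => ∑ i ∈ s, lp.single q i (z i)) atTop (𝓝 z) :=
        lp.hasSum_single hq z
      have h_norm := h_trunc.norm.rpow_const (Or.inr hq0.le)
      have h_map := ((S.continuous.tendsto z).comp h_trunc).norm.rpow_const (Or.inr hr.le)
      exact ((h_norm.eventually_lt_const hz_norm).and (h_map.eventually_const_lt hSz)).exists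
    set t := ∑ i ∈ s, lp.single q i (z i)
    have h_add := eventually_norm_sum_single_add_rpow_lt hq0 hC hy s z one_pos
    have h_sub := eventually_norm_sum_single_add_rpow_lt (y := fun a => -y a) hq0
      (by simpa using hC) (fun i => by simpa using (hy i).neg) s z one_pos
    obtain ⟨a, ha, h_add, h_sub⟩ := (hS.and_eventually (h_add.and h_sub)).exists
    rw [← sub_eq_add_neg] at h_sub
    have h_pow : η ^ r ≤ ‖S (y a)‖ ^ r := by gcongr
    have h_max := hF (S t) (S (y a))
    rw [← map_add, ← map_sub] at h_max
    push_cast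
    rcases le_max_iff.1 h_max with h | h
    · exact ⟨t + y a, by linarith, by linarith⟩
    · exact ⟨t - y a, by linarith, by linarith⟩

theorem exists_nat_mul_rpow_add_one_le {θ κ D : ℝ} (hθ : θ < 1) (hκ : 0 < κ) (hD : 0 < D)
    (K : ℝ) : ∃ N : ℕ, K * (N * D + 1) ^ θ ≤ N * κ - 1 := by
  have h_lim : Tendsto (fun t : ℝ => K * t ^ (θ - 1) + (κ / D + 1) * t⁻¹) atTop (𝓝 0) := by
    have h := tendsto_rpow_neg_atTop (sub_pos.2 hθ)
    rw [neg_sub] at h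
    simpa using (h.const_mul K).add (tendsto_inv_atTop_zero.const_mul (κ / D + 1))
  have h_atTop : Tendsto (fun N : ℕ => N * D + 1) atTop atTop :=
    Filter.tendsto_atTop_add_const_right _ _ (tendsto_natCast_atTop_atTop.atTop_mul_const hD)
  obtain ⟨N, hN⟩ :=
    ((h_lim.comp h_atTop).eventually_lt_const (show 0 < κ / D by positivity)).exists
  refine ⟨N, ?_⟩
  have h_pos : (0 : ℝ) < N * D + 1 := by positivity
  have h_mul := mul_le_mul_of_nonneg_right hN.le h_pos.le
  have h_left : (K * (N * D + 1) ^ (θ - 1) + (κ / D + 1) * (N * D + 1)⁻¹) * (N * D + 1) =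
      K * (N * D + 1) ^ θ + κ / D + 1 := by
    rw [Real.rpow_sub_one h_pos.ne']
    field_simp
    ring
  have h_right : κ / D * (N * D + 1) = N * κ + κ / D := by field_simp
  linarith [h_left.symm.trans_le (h_mul.trans_eq h_right)]

theorem tendsto_map_zero_of_lower_estimate (hq : q ≠ ⊤) (hr : 0 < r) (hrq : r < q.toReal)
    (hC : ∀ a, ‖y a‖ ≤ C) (hy : ∀ i, Tendsto (fun a => y a i) l (𝓝 0))
    (hF : ∀ a b : F, ‖a‖ ^ r + ‖b‖ ^ r ≤ max (‖a + b‖ ^ r) (‖a - b‖ ^ r))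
    (S : lp E q →L[ℝ] F) : Tendsto (fun a => S (y a)) l (𝓝 0) := by
  rw [tendsto_zero_iff_norm_tendsto_zero, Metric.tendsto_nhds]
  intro η hη
  by_contra h_freq
  simp only [Filter.not_eventually, dist_zero_right, norm_norm, not_lt] at h_freq
  obtain ⟨a, -⟩ := h_freq.exists
  have hC0 : 0 ≤ C := (norm_nonneg _).trans (hC a)
  have hq0 : 0 < q.toReal := hr.trans hrq
  obtain ⟨N, hN⟩ := exists_nat_mul_rpow_add_one_le ((div_lt_one hq0).2 hrq)
    (Real.rpow_pos_of_pos hη r) (show 0 < C ^ q.toReal + 1 by positivity) (‖S‖ ^ r)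
  obtain ⟨z, hz_norm, hSz⟩ :=
    exists_norm_rpow_lt_and_lt_norm_map_rpow hq hr hC hy hF S hη.le h_freq N
  refine (hN.trans_lt hSz).not_ge ?_
  calc ‖S z‖ ^ r ≤ (‖S‖ * ‖z‖) ^ r := by gcongr; exact S.le_opNorm z
    _ = ‖S‖ ^ r * (‖z‖ ^ q.toReal) ^ (r / q.toReal) := by
      rw [Real.mul_rpow (norm_nonneg _) (norm_nonneg _), ← Real.rpow_mul (norm_nonneg _),
        mul_div_cancel₀ _ hq0.ne']
    _ ≤ ‖S‖ ^ r * (N * (C ^ q.toReal + 1) + 1) ^ (r / q.toReal) := by gcongr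

theorem weaklyNull_of_tendsto_apply (hq : q ≠ ⊤) (hq1 : 1 < q) (hC : ∀ a, ‖y a‖ ≤ C)
    (hy : ∀ i, Tendsto (fun a => y a i) l (𝓝 0)) : WeaklyNull l y := by
  have h_toReal : 1 < q.toReal := by
    simpa using (ENNReal.toReal_lt_toReal ENNReal.one_ne_top hq).2 hq1
  refine tendsto_map_zero_of_lower_estimate hq one_pos h_toReal hC hy fun a b => ?_
  simp only [Real.rpow_one, Real.norm_eq_abs]
  grind

/-- Pitt's theorem, in sequential form. -/
theorem tendsto_map_zero_of_tendsto_apply {H : Type*} [NormedAddCommGroup H]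
    [InnerProductSpace ℝ H] (hq : q ≠ ⊤) (hq2 : 2 < q) (hC : ∀ a, ‖y a‖ ≤ C)
    (hy : ∀ i, Tendsto (fun a => y a i) l (𝓝 0)) (S : lp E q →L[ℝ] H) :
    Tendsto (fun a => S (y a)) l (𝓝 0) := by
  have h_toReal : 2 < q.toReal := by
    simpa using (ENNReal.toReal_lt_toReal ENNReal.ofNat_ne_top hq).2 hq2
  refine tendsto_map_zero_of_lower_estimate hq two_pos h_toReal hC hy (fun a b => ?_) S
  have h_law := parallelogram_law_with_norm ℝ a b
  simp only [Real.rpow_two]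
  grind

theorem WeaklyNull.tendsto_map_of_equiv_lp {V H : Type*} [NormedAddCommGroup V]
    [NormedSpace ℝ V] [NormedAddCommGroup H] [InnerProductSpace ℝ H] {v : α → V} (hq : q ≠ ⊤)
    (hq2 : 2 < q) (e : V ≃L[ℝ] lp (fun _ : ι => ℝ) q) (hv : WeaklyNull l v)
    (hC : ∀ a, ‖v a‖ ≤ C) (S : V →L[ℝ] H) : Tendsto (fun a => S (v a)) l (𝓝 0) := by
  have h_norm : ∀ a, ‖e (v a)‖ ≤ ‖(e : V →L[ℝ] lp (fun _ : ι => ℝ) q)‖ * C := fun a =>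
    (e.toContinuousLinearMap.le_opNorm _).trans
      (mul_le_mul_of_nonneg_left (hC a) (norm_nonneg _))
  have h_apply : ∀ i, Tendsto (fun a => e (v a) i) l (𝓝 0) := fun i =>
    hv ((lp.evalCLM ℝ (fun _ : ι => ℝ) q i).comp (e : V →L[ℝ] lp (fun _ : ι => ℝ) q))
  simpa using tendsto_map_zero_of_tendsto_apply hq hq2 h_norm h_apply 
    (S.comp (e.symm : lp (fun _ : ι => ℝ) q →L[ℝ] V))

end BoundedCoordinatewiseNull

section Decomposition

theorem exists_continuousLinearMap_sub_mem_of_disjoint {𝕜 V : Type*} [NontriviallyNormedField 𝕜]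
    [NormedAddCommGroup V] [NormedSpace 𝕜 V] [CompleteSpace V] {U W : Submodule 𝕜 V}
    (hUW : Disjoint U W) (hU : IsClosed (U : Set V)) (hW : IsClosed (W : Set V))
    (hX : IsClosed ((U ⊔ W : Submodule 𝕜 V) : Set V)) :
    ∃ B : ↥(U ⊔ W) →L[𝕜] W, ∀ x : ↥(U ⊔ W), (x : V) - B x ∈ U := by
  have : CompleteSpace ↥(U ⊔ W) := hX.completeSpace_coe
  have h_disjoint : Disjoint (W.submoduleOf (U ⊔ W)) (U.submoduleOf (U ⊔ W)) := by
    rw [disjoint_iff, Submodule.submoduleOf, Submodule.submoduleOf, ← Submodule.comap_inf,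
      hUW.symm.eq_bot, Submodule.comap_bot, Submodule.ker_subtype]
  have h_codisjoint : Codisjoint (W.submoduleOf (U ⊔ W)) (U.submoduleOf (U ⊔ W)) := by
    rw [codisjoint_iff, ← Submodule.submoduleOf_sup_of_le le_sup_right le_sup_left, sup_comm W,
      Submodule.submoduleOf_self]
  have h_top := Submodule.IsCompl.isTopCompl_of_isClosed ⟨h_disjoint, h_codisjoint⟩
    (hW.preimage continuous_subtype_val) (hU.preimage continuous_subtype_val)
  refine ⟨((U ⊔ W).subtypeL.comp (Submodule.projectionL _ _ h_top)).codRestrict W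
    (Submodule.projectionL_apply_mem h_top), fun x => ?_⟩
  have h_mem := Submodule.projectionL_apply_mem h_top.symm x
  rwa [Submodule.projectionL_eq_self_sub_projectionL] at h_mem

theorem isClosed_of_continuousLinearEquiv {𝕜 V F : Type*} [NontriviallyNormedField 𝕜]
    [NormedAddCommGroup V] [NormedSpace 𝕜 V] [NormedAddCommGroup F] [NormedSpace 𝕜 F]
    [CompleteSpace F] {W : Submodule 𝕜 V} (e : W ≃L[𝕜] F) : IsClosed (W : Set V) :=
  (completeSpace_coe_iff_isComplete.1
    ((completeSpace_congr (e := e.toEquiv) e.isUniformEmbedding).2 inferInstance)).isClosed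

theorem isClosed_of_forall_mem_of_forall_eq {𝕜 V : Type*} [NontriviallyNormedField 𝕜]
    [NormedAddCommGroup V] [NormedSpace 𝕜 V] {X : Submodule 𝕜 V} {P : V →L[𝕜] V}
    (hPX : ∀ x, P x ∈ X) (hP : ∀ x ∈ X, P x = x) : IsClosed (X : Set V) :=
  Submodule.ClosedComplemented.isClosed
    ⟨P.codRestrict X hPX, fun x => Subtype.ext (hP x x.2)⟩

end Decomposition

theorem lt_mul_of_lt_mul_mul_div_max {a b c d ε : ℝ} (hc : 0 < c) (hε : 0 ≤ ε)
    (h : ε < a * c * b / max c d) : ε < a * b := by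
  refine lt_of_mul_lt_mul_right ?_ hc.le
  calc ε * c ≤ ε * max c d := by gcongr; exact le_max_left c d
    _ < a * c * b := (lt_div_iff₀ (lt_max_of_lt_left hc)).1 h
    _ = a * b * c := by ring

namespace Xpw

section Restrict

theorem pair_snd_apply (x : Xpw p w) (i : ℕ) : (pair x).2 i = w i * seq x i :=
  (show ↥(XpwMod p w) from x).2 i

theorem nrmP_nonneg (x : Xpw p w) : 0 ≤ nrmP x :=
  lp.norm_nonneg' _

theorem nrm2_nonneg (x : Xpw p w) : 0 ≤ nrm2 x :=
  norm_nonneg _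

theorem nrmP_restrict_le (hp : 0 < p) (E : Set ℕ) (x : Xpw p w) :
    nrmP (restrict E x) ≤ nrmP x :=
  lp.norm_mono (ENNReal.ofReal_pos.2 hp).ne' fun i => norm_indicator_le_norm_self (seq x) i

theorem nrm2_restrict_le (E : Set ℕ) (x : Xpw p w) : nrm2 (restrict E x) ≤ nrm2 x :=
  lp.norm_mono two_ne_zero fun i => norm_indicator_le_norm_self (pair x).2 i

theorem pair_restrict_fst (s : Finset ℕ) (x : Xpw p w) :
    (pair (restrict s x)).1 = ∑ i ∈ s, lp.single (ENNReal.ofReal p) i (seq x i) := by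
  ext j
  rw [lp.coeFn_sum, Finset.sum_apply]
  simp only [lp.coeFn_single, Finset.sum_pi_single]
  exact Set.indicator_apply _ _ _

theorem pair_restrict_snd (s : Finset ℕ) (x : Xpw p w) :
    (pair (restrict s x)).2 = ∑ i ∈ s, lp.single 2 i (w i * seq x i) := by
  ext j
  rw [lp.coeFn_sum, Finset.sum_apply]
  simp only [lp.coeFn_single, Finset.sum_pi_single, ← pair_snd_apply]
  exact Set.indicator_apply _ _ _

theorem nrmP_restrict_rpow (hp : 0 < p) (s : Finset ℕ) (x : Xpw p w) :
    nrmP (restrict s x) ^ p = ∑ i ∈ s, |seq x i| ^ p := by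
  have h_norm := lp.norm_sum_single (p := ENNReal.ofReal p)
    (by rwa [ENNReal.toReal_ofReal hp.le]) (seq x) s
  rwa [← pair_restrict_fst, ENNReal.toReal_ofReal hp.le] at h_norm

theorem nrm2_restrict_rpow_two (s : Finset ℕ) (x : Xpw p w) :
    nrm2 (restrict s x) ^ (2 : ℝ) = ∑ i ∈ s, |w i * seq x i| ^ (2 : ℝ) := by
  have h_norm := lp.norm_sum_single (p := 2) (by simp) (fun i => w i * seq x i) s
  rwa [← pair_restrict_snd, ENNReal.toReal_ofNat] at h_norm

theorem omegaE_nonneg (hw : ∀ n, 0 ≤ w n) (E : Set ℕ) : 0 ≤ omegaE p w E :=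
  tsum_nonneg fun n => Real.rpow_nonneg (hw n) _

theorem nrm2_restrict_le_omegaE_rpow_mul_nrmP (hp : 2 < p) (hw : ∀ n, 0 ≤ w n) {E : Set ℕ}
    (hE : E.Finite) (x : Xpw p w) :
    nrm2 (restrict E x) ≤ omegaE p w E ^ ((p - 2) / (2 * p)) * nrmP x := by
  lift E to Finset ℕ using hE
  have hp0 : 0 < p := two_pos.trans hp
  have hp2 : 0 < p - 2 := sub_pos.2 hp
  have h_triple : p.HolderTriple (2 * p / (p - 2)) 2 :=
    ⟨by field_simp; ring, hp0, by positivity⟩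
  have h_omega : omegaE p w E = ∑ i ∈ E, w i ^ (2 * p / (p - 2)) :=
    Finset.tsum_subtype' E fun i => w i ^ (2 * p / (p - 2))
  have h_omega0 : 0 ≤ omegaE p w E := omegaE_nonneg hw E
  suffices h_le : nrm2 (restrict E x) ≤
      omegaE p w E ^ ((p - 2) / (2 * p)) * nrmP (restrict E x) from
    h_le.trans (mul_le_mul_of_nonneg_left (nrmP_restrict_le hp0 _ x) (Real.rpow_nonneg h_omega0 _))
  refine (Real.rpow_le_rpow_iff (nrm2_nonneg _)
    (mul_nonneg (Real.rpow_nonneg h_omega0 _) (nrmP_nonneg _)) two_pos).1 ?_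
  calc nrm2 (restrict E x) ^ (2 : ℝ)
      = ∑ i ∈ E, (|seq x i| * w i) ^ (2 : ℝ) := by
        simp only [nrm2_restrict_rpow_two, abs_mul, abs_of_nonneg (hw _), mul_comm]
    _ ≤ (∑ i ∈ E, |seq x i| ^ p) ^ (2 / p) *
          (∑ i ∈ E, w i ^ (2 * p / (p - 2))) ^ (2 / (2 * p / (p - 2))) :=
        Real.Lr_rpow_le_Lp_mul_Lq_of_nonneg E h_triple (fun i _ => abs_nonneg _) fun i _ => hw i
    _ = (omegaE p w E ^ ((p - 2) / (2 * p)) * nrmP (restrict E x)) ^ (2 : ℝ) := by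
        have h_exp : 2 / (2 * p / (p - 2)) = (p - 2) / (2 * p) * 2 := by field_simp
        rw [← nrmP_restrict_rpow hp0, ← h_omega, h_exp,
          Real.mul_rpow (Real.rpow_nonneg h_omega0 _) (nrmP_nonneg _), Real.rpow_mul h_omega0,
          ← Real.rpow_mul (nrmP_nonneg _), mul_div_cancel₀ _ hp0.ne', mul_comm]

end Restrict

section Norm

variable [Fact (1 ≤ ENNReal.ofReal p)]

/-- The isometric inclusion of `X_{p,w}` into `ℓ_p ⊕_∞ ℓ_2`, that is, `Xpw.pair` as a linear
isometry. -/
def pairLI : Xpw p w →ₗᵢ[ℝ] SeqP p × Seq2 :=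
  (XpwMod p w).subtypeₗᵢ

/-- The `i`-th coordinate functional of the natural basis of `X_{p,w}`. -/
def coordL (i : ℕ) : StrongDual ℝ (Xpw p w) :=
  (lp.evalCLM ℝ (fun _ : ℕ => ℝ) (ENNReal.ofReal p) i).comp
    ((ContinuousLinearMap.fst ℝ (SeqP p) Seq2).comp pairLI.toContinuousLinearMap)

instance : CompleteSpace (Xpw p w) := by
  have h_closed : IsClosed (XpwMod p w : Set (SeqP p × Seq2)) := by
    have h_iInter : (XpwMod p w : Set (SeqP p × Seq2)) = ⋂ n, {z | z.2 n = w n * z.1 n} :=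
      Set.ofPred_forall _
    rw [h_iInter]
    refine isClosed_iInter fun n => isClosed_eq ?_ ?_
    · exact (lp.evalCLM ℝ (fun _ : ℕ => ℝ) 2 n).continuous.comp continuous_snd
    · exact ((lp.evalCLM ℝ (fun _ : ℕ => ℝ) (ENNReal.ofReal p) n).continuous.comp
        continuous_fst).const_mul (w n)
  exact h_closed.completeSpace_coe

theorem restrict_add (E : Set ℕ) (x y : Xpw p w) :
    restrict E (x + y) = restrict E x + restrict E y := by
  refine pairLI.injective (Prod.ext (lp.ext ?_) (lp.ext ?_))
  · exact Set.indicator_add E (pair x).1 (pair y).1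
  · exact Set.indicator_add E (pair x).2 (pair y).2

theorem nrm2_le_nrm2_add_add_nrm2 (x y : Xpw p w) : nrm2 x ≤ nrm2 (x + y) + nrm2 y :=
  norm_le_add_norm_add (pair x).2 (pair y).2

theorem nrm2_add_le (x y : Xpw p w) : nrm2 (x + y) ≤ nrm2 x + nrm2 y :=
  norm_add_le (pair x).2 (pair y).2

theorem abs_seq_le_norm_restrict {E : Set ℕ} {i : ℕ} (hi : i ∈ E) (x : Xpw p w) :
    |seq x i| ≤ ‖restrict E x‖ := by
  have h_apply : seq (restrict E x) i = seq x i := Set.indicator_of_mem hi _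
  rw [← h_apply]
  exact (lp.norm_apply_le_norm (zero_lt_one.trans_le Fact.out).ne' _ i).trans
    (norm_fst_le (pairLI (restrict E x)))

variable {α : Type*} {l : Filter α} {x : α → Xpw p w}

theorem tendsto_norm_restrict_of_tendsto_seq (hx : ∀ i, Tendsto (fun a => seq (x a) i) l (𝓝 0))
    {s : Set ℕ} (hs : s.Finite) : Tendsto (fun a => ‖restrict s (x a)‖) l (𝓝 0) := by
  lift s to Finset ℕ using hs
  have h_fst : Tendsto (fun a => (pair (restrict s (x a))).1) l (𝓝 0) := by
    simpa only [pair_restrict_fst] using tendsto_sum_single_zero hx s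
  have h_snd : Tendsto (fun a => (pair (restrict s (x a))).2) l (𝓝 0) := by
    simpa only [pair_restrict_snd] using tendsto_sum_single_zero
      (fun i => by simpa using (hx i).const_mul (w i)) s
  have h_max := h_fst.norm.max h_snd.norm
  rwa [norm_zero, norm_zero, max_self] at h_max

theorem weaklyNull_of_tendsto_seq (hp : 1 < p) {C : ℝ} (hC : ∀ a, ‖x a‖ ≤ C)
    (hx : ∀ i, Tendsto (fun a => seq (x a) i) l (𝓝 0)) : WeaklyNull l x := by
  refine .of_linearIsometry pairLI (.prodMk (x := fun a => (pair (x a)).1)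
    (y := fun a => (pair (x a)).2) ?_ ?_)
  · exact weaklyNull_of_tendsto_apply ENNReal.ofReal_ne_top (ENNReal.one_lt_ofReal.2 hp)
      (fun a => (norm_fst_le (pairLI (x a))).trans (hC a)) hx
  · refine weaklyNull_of_tendsto_apply ENNReal.ofNat_ne_top ENNReal.one_lt_two
      (fun a => (norm_snd_le (pairLI (x a))).trans (hC a)) fun i => ?_
    simpa only [pair_snd_apply, mul_zero] using (hx i).const_mul (w i)

theorem exists_add_eq_and_tendsto (hp : 2 < p) {U W : Submodule ℝ (Xpw p w)}
    (hUW : Disjoint U W) (hU : IsClosed (U : Set (Xpw p w)))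
    (hX : IsClosed ((U ⊔ W : Submodule ℝ (Xpw p w)) : Set (Xpw p w))) (e : W ≃L[ℝ] SeqP p)
    (hxX : ∀ a, x a ∈ U ⊔ W) {C : ℝ} (hC : ∀ a, ‖x a‖ ≤ C)
    (hx : ∀ i, Tendsto (fun a => seq (x a) i) l (𝓝 0)) :
    ∃ u v : α → Xpw p w, (∀ a, u a ∈ U) ∧ (∀ a, u a + v a = x a) ∧
      (∀ i, Tendsto (fun a => seq (u a) i) l (𝓝 0)) ∧ Tendsto (fun a => nrm2 (v a)) l (𝓝 0) := by
  obtain ⟨B, hB⟩ := exists_continuousLinearMap_sub_mem_of_disjoint hUW hU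
    (isClosed_of_continuousLinearEquiv e) hX
  let x' : α → ↥(U ⊔ W) := fun a => ⟨x a, hxX a⟩
  have h_weak : WeaklyNull l x' := .of_linearIsometry (U ⊔ W).subtypeₗᵢ
    (weaklyNull_of_tendsto_seq (one_lt_two.trans hp) hC hx)
  refine ⟨fun a => x a - B (x' a), fun a => B (x' a), fun a => hB (x' a),
    fun a => sub_add_cancel _ _, fun i => ?_, ?_⟩
  · exact (h_weak.map ((U ⊔ W).subtypeL - W.subtypeL.comp B)) (coordL i)
  · have h_norm : ∀ a, ‖B (x' a)‖ ≤ ‖B‖ * C := fun a =>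
      (B.le_opNorm _).trans (mul_le_mul_of_nonneg_left (hC a) (norm_nonneg _))
    have h_two_lt : 2 < ENNReal.ofReal p := by
      simpa using (ENNReal.ofReal_lt_ofReal_iff (two_pos.trans hp)).2 hp
    have h_snd := (h_weak.map B).tendsto_map_of_equiv_lp ENNReal.ofReal_ne_top h_two_lt e h_norm
      ((ContinuousLinearMap.snd ℝ (SeqP p) Seq2).comp
        (pairLI.toContinuousLinearMap.comp W.subtypeL))
    exact tendsto_zero_iff_norm_tendsto_zero.1 h_snd

/-- The sequence whose limit is the paper's `β'`: the infimum of the `b` such that, for every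
`ε > 0`, some `u ∈ U` with `‖P_n u‖ < ε` has `r(u) ≤ b`. Since `ratio 0 = 0`, the zero vector
has to be excluded. -/
def tailRatio (U : Submodule ℝ (Xpw p w)) (n : ℕ) : ℝ :=
  sInf {b : ℝ | ∀ ε : ℝ, 0 < ε →
    ∃ u : Xpw p w, u ∈ U ∧ u ≠ 0 ∧ ‖restrict {k : ℕ | k < n} u‖ < ε ∧ ratio u ≤ b}

theorem exists_forall_mul_nrmP_le_nrm2_of_lt_tailRatio {U : Submodule ℝ (Xpw p w)} {n : ℕ}
    {β : ℝ} (hβ : β < tailRatio U n) :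
    ∃ η > 0, ∀ u ∈ U, ‖restrict {k : ℕ | k < n} u‖ < η → β * nrmP u ≤ nrm2 u := by
  have h_ratio (u : Xpw p w) : 0 ≤ ratio u := div_nonneg (nrm2_nonneg u) (nrmP_nonneg u)
  have h_notMem := notMem_of_lt_csInf hβ ⟨0, fun b hb => by
    obtain ⟨u, -, -, -, hu⟩ := hb 1 one_pos
    exact (h_ratio u).trans hu⟩
  simp only [Set.mem_ofPred_eq, not_forall, not_exists, not_and, not_le] at h_notMem
  obtain ⟨η, hη, h_lt⟩ := h_notMem
  refine ⟨η, hη, fun u hu hu_small => ?_⟩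
  rcases (nrmP_nonneg u).eq_or_lt with h_zero | h_pos
  · rw [← h_zero, mul_zero]
    exact nrm2_nonneg u
  · have h_ne : u ≠ 0 := by
      rintro rfl
      exact h_pos.ne' norm_zero
    exact ((lt_div_iff₀ h_pos).1 (h_lt u hu h_ne hu_small)).le

theorem mul_nrm2_restrict_add_le (hp : 2 < p) (hw : ∀ n, 0 ≤ w n) {E : Set ℕ} (hE : E.Finite)
    {u v : Xpw p w} {β δ ε : ℝ} (hβ : 0 ≤ β) (hδ : 0 < δ) (hu : β * nrmP u ≤ nrm2 u)
    (hδE : δ * nrm2 (u + v) ≤ nrm2 (restrict E (u + v)))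
    (hεE : omegaE p w E ^ ((p - 2) / (2 * p)) ≤ ε) :
    (β - ε / δ) * nrm2 (restrict E (u + v)) ≤ (β + ε) * nrm2 v := by
  set y := nrm2 (restrict E (u + v))
  set κ := omegaE p w E ^ ((p - 2) / (2 * p))
  have hκ : 0 ≤ κ := Real.rpow_nonneg (omegaE_nonneg hw E) _
  have h_restrict : y ≤ nrm2 (restrict E u) + nrm2 v :=
    calc y ≤ nrm2 (restrict E u) + nrm2 (restrict E v) := by
          simpa only [y, restrict_add] using nrm2_add_le _ _
      _ ≤ nrm2 (restrict E u) + nrm2 v := by gcongr; exact nrm2_restrict_le E v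
  have h_nrm2 : nrm2 u ≤ y / δ + nrm2 v :=
    (nrm2_le_nrm2_add_add_nrm2 u v).trans (by gcongr; rwa [le_div_iff₀' hδ])
  have h_main : β * y ≤ ε * (y / δ + nrm2 v) + β * nrm2 v :=
    calc β * y ≤ β * (κ * nrmP u + nrm2 v) := by
          gcongr
          exact h_restrict.trans
            (by gcongr; exact nrm2_restrict_le_omegaE_rpow_mul_nrmP hp hw hE u)
      _ = κ * (β * nrmP u) + β * nrm2 v := by ring
      _ ≤ κ * (y / δ + nrm2 v) + β * nrm2 v := by gcongr; exact hu.trans h_nrm2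
      _ ≤ ε * (y / δ + nrm2 v) + β * nrm2 v := by
          gcongr
          exact (nrm2_nonneg u).trans h_nrm2
  linear_combination h_main

theorem tendsto_nrm2_restrict_of_lt_tailRatio (hp : 2 < p) (hw : ∀ n, 0 ≤ w n)
    {U W : Submodule ℝ (Xpw p w)} (hUW : Disjoint U W) (hU : IsClosed (U : Set (Xpw p w)))
    (hX : IsClosed ((U ⊔ W : Submodule ℝ (Xpw p w)) : Set (Xpw p w))) (e : W ≃L[ℝ] SeqP p)
    (hxX : ∀ a, x a ∈ U ⊔ W) {C : ℝ} (hC : ∀ a, ‖x a‖ ≤ C)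
    (hx : ∀ i, Tendsto (fun a => seq (x a) i) l (𝓝 0)) {n : ℕ} {β δ ε : ℝ}
    (hβ : β < tailRatio U n) (hδ : 0 < δ) (hε : ε / δ < β) {E : α → Set ℕ}
    (hE : ∀ a, (E a).Finite) (hδE : ∀ a, δ * nrm2 (x a) ≤ nrm2 (restrict (E a) (x a)))
    (hεE : ∀ a, omegaE p w (E a) ^ ((p - 2) / (2 * p)) ≤ ε) :
    Tendsto (fun a => nrm2 (restrict (E a) (x a))) l (𝓝 0) := by
  obtain ⟨η, hη, h_tail⟩ := exists_forall_mul_nrmP_le_nrm2_of_lt_tailRatio hβ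
  obtain ⟨u, v, huU, huv, hu, hv⟩ := exists_add_eq_and_tendsto hp hUW hU hX e hxX hC hx
  have h_small := (tendsto_norm_restrict_of_tendsto_seq hu
    (Set.finite_lt_nat n)).eventually_lt_const hη
  have h_bound : Tendsto (fun a => (β + ε) * nrm2 (v a) / (β - ε / δ)) l (𝓝 0) := by
    simpa using (hv.const_mul (β + ε)).div_const (β - ε / δ)
  refine squeeze_zero' (.of_forall fun a => nrm2_nonneg _) ?_ h_bound
  filter_upwards [h_small] with a ha
  have hε0 : 0 ≤ ε := (Real.rpow_nonneg (omegaE_nonneg hw _) _).trans (hεE a)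
  rw [le_div_iff₀' (sub_pos.2 hε), ← huv a]
  exact mul_nrm2_restrict_add_le hp hw (hE a) ((div_nonneg hε0 hδ.le).trans hε.le) hδ
    (h_tail _ (huU a) ha) (by simpa only [huv] using hδE a) (hεE a)

theorem tendsto_seq_of_norm_restrict_lt_inv {x : ℕ → Xpw p w}
    (hx : ∀ n : ℕ, ‖restrict {k : ℕ | k < n + 1} (x n)‖ < ((n + 1 : ℕ) : ℝ)⁻¹) (i : ℕ) :
    Tendsto (fun n => seq (x n) i) atTop (𝓝 0) := by
  have h_inv : Tendsto (fun n : ℕ => ((n + 1 : ℕ) : ℝ)⁻¹) atTop (𝓝 0) := by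
    simpa using tendsto_one_div_add_atTop_nhds_zero_nat (𝕜 := ℝ)
  refine squeeze_zero_norm' ?_ h_inv
  filter_upwards [Filter.eventually_ge_atTop i] with n hn
  exact (abs_seq_le_norm_restrict (E := {k | k < n + 1}) (Nat.lt_succ_of_le hn) (x n)).trans
    (hx n).le

end Norm

end Xpw

theorem stmt11_general (hp : 2 < p) [Fact (1 ≤ ENNReal.ofReal p)] (hw : ∀ n, 0 ≤ w n)
    {U W : Submodule ℝ (Xpw p w)} (hUW : Disjoint U W) (hU : IsClosed (U : Set (Xpw p w)))
    (hX : IsClosed ((U ⊔ W : Submodule ℝ (Xpw p w)) : Set (Xpw p w))) (e : W ≃L[ℝ] SeqP p)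
    {β' : ℝ} (hβ' : Tendsto (Xpw.tailRatio U) atTop (𝓝 β')) {c δ ε : ℝ} (hc : 0 < c)
    (hδ : 0 < δ) (hε : ε < β' * δ) :
    ¬ ∃ ε' : ℝ, 0 < ε' ∧ ∀ N : ℕ, 1 ≤ N → ∃ x ∈ U ⊔ W, ‖x‖ = 1 ∧ ∃ E : Set ℕ, E.Finite ∧
      ‖restrict {n : ℕ | n < N} x‖ < (N : ℝ)⁻¹ ∧
      δ * nrm2 x ≤ nrm2 (restrict E x) ∧
      c * nrm2 (restrict E x) ≤ ε ∧
      omegaE p w E ^ ((p - 2) / (2 * p)) ≤ c * nrm2 (restrict E x) ∧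
      ε' ≤ omegaE p w E ^ ((p - 2) / (2 * p)) := by
  rintro ⟨ε', hε', h⟩
  choose x hxX hx_norm E hE hx_small hδE hεE h_omega hε'E using fun n : ℕ => h (n + 1) n.succ_pos
  obtain ⟨β, hεβ, hββ'⟩ := exists_between ((div_lt_iff₀ hδ).2 hε)
  obtain ⟨k, hk⟩ := (hβ'.eventually_const_lt hββ').exists
  have h_lim := Xpw.tendsto_nrm2_restrict_of_lt_tailRatio hp hw hUW hU hX e hxX
    (fun n => (hx_norm n).le) (Xpw.tendsto_seq_of_norm_restrict_lt_inv hx_small) hk hδ hεβ hE hδE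
    fun n => (h_omega n).trans (hεE n)
  refine (div_pos hε' hc).not_ge (ge_of_tendsto' h_lim fun n => ?_)
  exact (div_le_iff₀' hc).2 ((hε'E n).trans (h_omega n))

open Filter in
/-- Corollary 2.2: suppose `X = U ⊕ W ⊆ X_p` with `U` isomorphic to
`ℓ_2`, `W` isomorphic to `ℓ_p`, and `X` complemented in `X_p` with projection `P`; let
`β' ≤ 1` be as in Proposition 2.1.  Then for any `c, δ > 0` and
`0 < ε < β' c δ / max {c, δ⁻¹}` there is no `0 < ε' < ε` such that for every `N` there
are a norm-one `x ∈ X` and a finite `E ⊆ {N, N+1, …}` satisfying (a) `‖x_{|[1,N]}‖ < N⁻¹`,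
(b) `|x_{|E}|_2 ≥ δ |x|_2`, (c) `ε ≥ c |x_{|E}|_2 ≥ ω(E)^{(p-2)/(2p)} ≥ ε'`. -/
theorem stmt11 (p : ℝ) (hp : 2 < p) [Fact (1 ≤ ENNReal.ofReal p)]
    (w : ℕ → ℝ) (hw : IsXpWeight p w)
    (X U W : Submodule ℝ (Xpw p w))
    (hXUW : X = U ⊔ W) (hUWdisj : U ⊓ W = ⊥)
    (hU2 : Nonempty (↥U ≃L[ℝ] Seq2)) (hWp : Nonempty (↥W ≃L[ℝ] SeqP p))
    (P : Xpw p w →L[ℝ] Xpw p w)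
    (hPX : ∀ x : Xpw p w, P x ∈ X) (hPid : ∀ x ∈ X, P x = x)
    (β' : ℝ)
    (hβ' : Tendsto (fun n : ℕ => sInf {b : ℝ | ∀ ε : ℝ, 0 < ε →
        ∃ u : Xpw p w, u ∈ U ∧ u ≠ 0 ∧ ‖restrict {k : ℕ | k < n} u‖ < ε ∧ ratio u ≤ b})
      atTop (nhds β'))
    (hβ'1 : β' ≤ 1)
    (c δ ε : ℝ) (hc : 0 < c) (hδ : 0 < δ) (hε0 : 0 < ε)
    (hε : ε < β' * c * δ / max c δ⁻¹) :
    ¬ ∃ ε' : ℝ, 0 < ε' ∧ ε' < ε ∧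
      ∀ N : ℕ, 1 ≤ N → ∃ x : Xpw p w, x ∈ X ∧ ‖x‖ = 1 ∧
        ∃ E : Set ℕ, E.Finite ∧ E ⊆ {n : ℕ | N ≤ n} ∧
          ‖restrict {n : ℕ | n < N} x‖ < (N : ℝ)⁻¹ ∧
          nrm2 (restrict E x) ≥ δ * nrm2 x ∧
          ε ≥ c * nrm2 (restrict E x) ∧
          c * nrm2 (restrict E x) ≥ omegaE p w E ^ ((p - 2) / (2 * p)) ∧
          omegaE p w E ^ ((p - 2) / (2 * p)) ≥ ε' := by
  obtain ⟨eU⟩ := hU2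
  obtain ⟨eW⟩ := hWp
  subst hXUW
  rintro ⟨ε', hε', -, h⟩
  refine stmt11_general hp (fun n => (hw.1 n).le) (disjoint_iff.2 hUWdisj)
    (isClosed_of_continuousLinearEquiv eU) (isClosed_of_forall_mem_of_forall_eq hPX hPid) eW hβ' hc
    hδ (lt_mul_of_lt_mul_mul_div_max hc hε0.le hε) ⟨ε', hε', fun N hN => ?_⟩
  obtain ⟨x, hxX, hx_norm, E, hE, -, h_rest⟩ := h N hN
  exact ⟨x, hxX, hx_norm, E, hE, h_rest⟩
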